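/- Let σ : [0,∞) → ℝ be continuous and suppose lim_{t→∞} (log t) · ∫_t^{t+1} σ(s)² ds = 0. Then lim_{t→∞} (log t) · ∫_0^t e^{−2(t−s)} σ(s)² ds = 0. -/

import Mathlib

open MeasureTheory Filter Set

/-!
Write `D t` for the integral of `exp (-(c * (t - s))) • f s` over `0 ≤ s ≤ t` and `I t` for the
integral of `‖f‖` over `[t, t + 1]`. Splitting the first integral at `t` gives
`‖D (t + 1)‖ ≤ exp (-c) * ‖D t‖ + exp |c| * I t`. If a weight `w` grows over a unit step by a factor
at most `r < exp c`, then `w • D` contracts by the factor `r * exp (-c) < 1` at each unit step, up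
to an error of the order of `w * I`, which tends to zero; hence so does `w • D`. For `w = log` every
factor `r > 1` is eventually admissible.
-/

section Contraction

variable {g e : ℝ → ℝ} {q T M : ℝ}

lemma le_pow_floor_mul_of_le_mul (hq : 0 ≤ q) (hg : ∀ t ≥ T, g (t + 1) ≤ q * g t)
    (hM : ∀ t ∈ Icc T (T + 1), g t ≤ M) {t : ℝ} (ht : T ≤ t) :
    g t ≤ q ^ ⌊t - T⌋₊ * M := by
  set n := ⌊t - T⌋₊
  have hn_le : (n : ℝ) ≤ t - T := Nat.floor_le (sub_nonneg.2 ht)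
  have hlt_n : t - T < n + 1 := Nat.lt_floor_add_one _
  have hstep : ∀ k < n, g (t - n + (k + 1 : ℕ)) ≤ q * g (t - n + k) := fun k _ ↦ by
    have hk : T ≤ t - n + k := by linarith [k.cast_nonneg (α := ℝ)]
    simpa only [Nat.cast_add_one, add_assoc] using hg _ hk
  calc g t = g (t - n + n) := by rw [sub_add_cancel]
    _ ≤ q ^ n * g (t - n + (0 : ℕ)) := le_geom (u := fun k ↦ g (t - n + k)) hq n hstep
    _ = q ^ n * g (t - n) := by rw [Nat.cast_zero, add_zero]
    _ ≤ q ^ n * M := by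
      gcongr
      exact hM _ ⟨by linarith, by linarith⟩

lemma tendsto_pow_floor_sub_atTop_nhds_zero (hq₀ : 0 ≤ q) (hq₁ : q < 1) :
    Tendsto (fun t : ℝ ↦ q ^ ⌊t - T⌋₊) atTop (nhds 0) :=
  (tendsto_pow_atTop_nhds_zero_of_lt_one hq₀ hq₁).comp <|
    tendsto_nat_floor_atTop.comp (tendsto_atTop_add_const_right _ (-T) tendsto_id)

theorem tendsto_zero_of_le_mul_add (hq₀ : 0 ≤ q) (hq₁ : q < 1) (hg₀ : ∀ᶠ t in atTop, 0 ≤ g t)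
    (hbdd : ∀ᶠ t in atTop, BddAbove (g '' Icc t (t + 1))) (he : Tendsto e atTop (nhds 0))
    (hg : ∀ᶠ t in atTop, g (t + 1) ≤ q * g t + e t) :
    Tendsto g atTop (nhds 0) := by
  refine tendsto_order.2 ⟨fun a ha ↦ hg₀.mono fun t ht ↦ ha.trans_le ht, fun ε hε ↦ ?_⟩
  have hδ : 0 < (1 - q) * (ε / 2) := mul_pos (sub_pos.2 hq₁) (half_pos hε)
  obtain ⟨T, hT⟩ := eventually_atTop.1 (hg.and (he.eventually_lt_const hδ))
  obtain ⟨T', ⟨M, hM⟩, hTT'⟩ := (hbdd.and (eventually_ge_atTop T)).exists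
  -- `ε / 2` is the fixed point of `x ↦ q * x + (1 - q) * (ε / 2)`.
  have hstep : ∀ t ≥ T', g (t + 1) - ε / 2 ≤ q * (g t - ε / 2) := fun t ht ↦ by
    obtain ⟨hgt, het⟩ := hT t (hTT'.trans ht)
    linarith
  have hbound : ∀ t ∈ Icc T' (T' + 1), g t - ε / 2 ≤ M - ε / 2 := fun t ht ↦
    sub_le_sub_right (hM (mem_image_of_mem g ht)) _
  have hdecay : Tendsto (fun t ↦ q ^ ⌊t - T'⌋₊ * (M - ε / 2)) atTop (nhds 0) := by
    simpa only [zero_mul] using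
      (tendsto_pow_floor_sub_atTop_nhds_zero hq₀ hq₁).mul_const (M - ε / 2)
  filter_upwards [hdecay.eventually_lt_const (half_pos hε), eventually_ge_atTop T'] with t hlt ht
  linarith [le_pow_floor_mul_of_le_mul (g := fun t ↦ g t - ε / 2) hq₀ hstep hbound ht]

end Contraction

section DiscountedIntegral

variable {E : Type*} [NormedAddCommGroup E] {f : ℝ → E} {w : ℝ → ℝ} {a b c r s : ℝ}

lemma neg_mul_sub_le_abs_mul_sub (hs : s ∈ Icc a b) : -(c * (b - s)) ≤ |c| * (b - a) :=
  calc -(c * (b - s)) = -c * (b - s) := (neg_mul _ _).symm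
    _ ≤ |c| * (b - a) := mul_le_mul (neg_le_abs c) (by linarith [hs.1]) (sub_nonneg.2 hs.2)
      (abs_nonneg c)

lemma intervalIntegrable_of_locallyIntegrableOn_Ici (hf : LocallyIntegrableOn f (Ici 0))
    (ha : 0 ≤ a) (hb : 0 ≤ b) : IntervalIntegrable f volume a b :=
  (hf.integrableOn_compact_subset (fun _ hs ↦ (le_min ha hb).trans hs.1)
    isCompact_uIcc).intervalIntegrable

variable [NormedSpace ℝ E]

/-- The exponentially discounted integral `∫₀ᵗ e^{-c(t-s)} f(s) ds` of `f` at rate `c`, started at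
time `0`; the integral in `stmt6` is the case `c = 2`, `f = σ²`. -/
noncomputable def discountedIntegral (c : ℝ) (f : ℝ → E) (t : ℝ) : E :=
  ∫ s in (0 : ℝ)..t, Real.exp (-(c * (t - s))) • f s

lemma discountedIntegral_eq_add (hf : LocallyIntegrableOn f (Ici 0)) (ha : 0 ≤ a) (hb : 0 ≤ b) :
    discountedIntegral c f b = Real.exp (-(c * (b - a))) • discountedIntegral c f a
      + ∫ s in a..b, Real.exp (-(c * (b - s))) • f s := by
  have hint : ∀ {x y : ℝ}, 0 ≤ x → 0 ≤ y →
      IntervalIntegrable (fun s ↦ Real.exp (-(c * (b - s))) • f s) volume x y := fun hx hy ↦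
    (intervalIntegrable_of_locallyIntegrableOn_Ici hf hx hy).continuousOn_smul (by fun_prop)
  have hsemigroup : ∀ s, Real.exp (-(c * (b - s))) • f s
      = Real.exp (-(c * (b - a))) • Real.exp (-(c * (a - s))) • f s := fun s ↦ by
    rw [smul_smul, ← Real.exp_add]
    ring_nf
  rw [discountedIntegral, discountedIntegral, ← intervalIntegral.integral_smul,
    ← intervalIntegral.integral_add_adjacent_intervals (hint le_rfl ha) (hint ha hb)]
  simp only [hsemigroup]

lemma norm_discountedIntegral_le (hf : LocallyIntegrableOn f (Ici 0)) (ha : 0 ≤ a) (hab : a ≤ b) :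
    ‖discountedIntegral c f b‖ ≤ Real.exp (-(c * (b - a))) * ‖discountedIntegral c f a‖
      + Real.exp (|c| * (b - a)) * ∫ s in a..b, ‖f s‖ := by
  have hb := ha.trans hab
  have hnew : ‖∫ s in a..b, Real.exp (-(c * (b - s))) • f s‖
      ≤ ∫ s in a..b, Real.exp (|c| * (b - a)) * ‖f s‖ := by
    refine intervalIntegral.norm_integral_le_of_norm_le hab (ae_of_all _ fun s hs ↦ ?_)
      ((intervalIntegrable_of_locallyIntegrableOn_Ici hf ha hb).norm.const_mul _)
    rw [norm_smul, Real.norm_eq_abs, Real.abs_exp]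
    gcongr
    exact neg_mul_sub_le_abs_mul_sub (Ioc_subset_Icc_self hs)
  rw [intervalIntegral.integral_const_mul] at hnew
  rw [discountedIntegral_eq_add hf ha hb]
  refine (norm_add_le _ _).trans (add_le_add (le_of_eq ?_) hnew)
  rw [norm_smul, Real.norm_eq_abs, Real.abs_exp]

lemma bddAbove_norm_discountedIntegral_image_Icc (hf : LocallyIntegrableOn f (Ici 0))
    (ha : 0 ≤ a) : BddAbove ((fun t ↦ ‖discountedIntegral c f t‖) '' Icc a b) := by
  refine ⟨Real.exp (|c| * (b - a)) * ‖discountedIntegral c f a‖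
    + Real.exp (|c| * (b - a)) * ∫ s in a..b, ‖f s‖, forall_mem_image.2 fun t ht ↦ ?_⟩
  have hrate : |c| * (t - a) ≤ |c| * (b - a) := by
    gcongr
    exact ht.2
  have hint : ∫ s in a..t, ‖f s‖ ≤ ∫ s in a..b, ‖f s‖ :=
    intervalIntegral.integral_mono_interval le_rfl ht.1 ht.2 (ae_of_all _ fun s ↦ norm_nonneg (f s))
      (intervalIntegrable_of_locallyIntegrableOn_Ici hf ha (ha.trans (ht.1.trans ht.2))).norm
  have hint₀ : 0 ≤ ∫ s in a..t, ‖f s‖ :=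
    intervalIntegral.integral_nonneg ht.1 fun s _ ↦ norm_nonneg (f s)
  refine (norm_discountedIntegral_le hf ha ht.1).trans ?_
  gcongr
  exact (neg_mul_sub_le_abs_mul_sub (left_mem_Icc.2 ht.1)).trans hrate

theorem stmt6_general (hf : LocallyIntegrableOn f (Ici 0)) (hr : 0 ≤ r) (hrc : r < Real.exp c)
    (hw : ∀ᶠ t in atTop, ∀ s ∈ Icc t (t + 1), |w s| ≤ r * |w t|)
    (h : Tendsto (fun t ↦ w t * ∫ s in t..(t + 1), ‖f s‖) atTop (nhds 0)) :
    Tendsto (fun t ↦ w t • discountedIntegral c f t) atTop (nhds 0) := by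
  have hq : r * Real.exp (-c) < 1 := by
    rwa [Real.exp_neg, ← div_eq_mul_inv, div_lt_one (Real.exp_pos c)]
  have herr : Tendsto (fun t ↦ r * Real.exp |c| * ‖w t * ∫ s in t..(t + 1), ‖f s‖‖)
      atTop (nhds 0) := by
    simpa only [norm_zero, mul_zero] using h.norm.const_mul (r * Real.exp |c|)
  refine tendsto_zero_iff_norm_tendsto_zero.2 <| tendsto_zero_of_le_mul_add (by positivity) hq
    (Eventually.of_forall fun t ↦ norm_nonneg _) ?_ herr ?_
  · filter_upwards [hw, eventually_ge_atTop 0] with t hwt ht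
    obtain ⟨M, hM⟩ := bddAbove_norm_discountedIntegral_image_Icc (b := t + 1) (c := c) hf ht
    refine ⟨r * |w t| * M, forall_mem_image.2 fun s hs ↦ ?_⟩
    rw [norm_smul]
    exact mul_le_mul (hwt s hs) (hM (mem_image_of_mem _ hs)) (norm_nonneg _) (by positivity)
  · filter_upwards [hw, eventually_ge_atTop 0] with t hwt ht
    have hle : t ≤ t + 1 := by linarith
    have hI : 0 ≤ ∫ s in t..(t + 1), ‖f s‖ :=
      intervalIntegral.integral_nonneg hle fun s _ ↦ norm_nonneg (f s)
    have hD := norm_discountedIntegral_le (c := c) hf ht hle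
    rw [add_sub_cancel_left, mul_one, mul_one] at hD
    rw [norm_smul, norm_smul, norm_mul, Real.norm_of_nonneg hI]
    calc |w (t + 1)| * ‖discountedIntegral c f (t + 1)‖
        ≤ r * |w t| * (Real.exp (-c) * ‖discountedIntegral c f t‖
            + Real.exp |c| * ∫ s in t..(t + 1), ‖f s‖) :=
          mul_le_mul (hwt _ (right_mem_Icc.2 hle)) hD (norm_nonneg _) (by positivity)
      _ = r * Real.exp (-c) * (|w t| * ‖discountedIntegral c f t‖)
            + r * Real.exp |c| * (|w t| * ∫ s in t..(t + 1), ‖f s‖) := by ring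

end DiscountedIntegral

lemma eventually_abs_log_le_mul_abs_log {r : ℝ} (hr : 1 < r) :
    ∀ᶠ t in atTop, ∀ s ∈ Icc t (t + 1), |Real.log s| ≤ r * |Real.log t| := by
  have hlarge : ∀ᶠ t in atTop, 1 ≤ (r - 1) * Real.log t :=
    (Real.tendsto_log_atTop.const_mul_atTop (sub_pos.2 hr)).eventually_ge_atTop 1
  filter_upwards [hlarge, eventually_ge_atTop 1] with t hlog ht s hs
  have ht₀ : 0 < t := by linarith
  have hs₀ : 0 < s := ht₀.trans_le hs.1
  have hratio : Real.log s - Real.log t ≤ 1 := by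
    rw [← Real.log_div hs₀.ne' ht₀.ne']
    calc Real.log (s / t) ≤ s / t - 1 := Real.log_le_sub_one_of_pos (div_pos hs₀ ht₀)
      _ ≤ 1 := by
        rw [sub_le_iff_le_add, div_le_iff₀ ht₀]
        linarith [hs.2]
  rw [abs_of_nonneg (Real.log_nonneg ht), abs_of_nonneg (Real.log_nonneg (ht.trans hs.1))]
  linarith

/-- If `σ : [0,∞) → ℝ` is continuous and `(log t) · ∫_t^{t+1} σ(s)² ds → 0` as `t → ∞`,
then `(log t) · ∫_0^t e^{−2(t−s)} σ(s)² ds → 0` as `t → ∞`. -/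
theorem stmt6 (σ : ℝ → ℝ) (hσ : ContinuousOn σ (Set.Ici (0 : ℝ)))
    (h : Tendsto (fun t : ℝ => Real.log t * ∫ s in t..(t + 1), σ s ^ 2) atTop (nhds 0)) :
    Tendsto
      (fun t : ℝ => Real.log t * ∫ s in (0 : ℝ)..t, Real.exp (-(2 * (t - s))) * σ s ^ 2)
      atTop (nhds 0) :=
  stmt6_general (f := fun s ↦ σ s ^ 2) ((hσ.pow 2).locallyIntegrableOn measurableSet_Ici)
    zero_le_two (by linarith [Real.add_one_le_exp 2])
    (eventually_abs_log_le_mul_abs_log one_lt_two) (by simpa using h)
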